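/- arXiv:2509.03892 — 3 statements merged into one kernel-verified Lean document; each statement's English description precedes it below -/
import Mathlib

section
/- Let n ≥ 1 and let ReLU : ℝ → ℝ be defined by ReLU(t) = max(t, 0). Let F_{n,ReLU} = { x ↦ ReLU(v·x + b) : v ∈ ℝ^n, b ∈ ℝ }, a family of functions ℝ^n → ℝ. Then opt_std(F_{n,ReLU}) = n + 1: some deterministic learner makes at most n + 1 mistakes for every hidden f ∈ F_{n,ReLU} and every finite input sequence, and for every deterministic learner there exist f ∈ F_{n,ReLU} and a finite input sequence forcing at least n + 1 mistakes. -/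
/-!
Let `W` be a finite-dimensional space of functions with values in an ordered field. A positive
value of `w⁺` determines the value of `w`, so all `w ∈ W` explaining a given history differ by
elements of the subspace of `W` vanishing at the inputs with a positive answer.

The learner answers `0` unless the answer is forced by the history. When it errs, the answer is
positive and two explanations differ at the input, so that subspace loses a dimension: at most
`dim W` mistakes. Conversely, as long as some element of the subspace is nonzero at some `x`, the
adversary can ask for `x`, pick any positive answer other than the guess, and correct the hidden
function by a multiple of that element; only one dimension is lost per round, so at least `dim W`
mistakes are forced. Affine functions on `ℝⁿ` form a space of dimension `n + 1`.
-/

/- Number of mistakes made by a deterministic learner `L` in the standard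
(strong-feedback) online model, with hidden function `f`, starting from a given
history of past (input, correct output) pairs, on a finite input sequence. -/
open Classical in
noncomputable def stdMistakes {X Y : Type*} (L : List (X × Y) → X → Y) (f : X → Y) :
    List (X × Y) → List X → ℕ
  | _, [] => 0
  | hist, x :: xs =>
      (if L hist x = f x then 0 else 1) + stdMistakes L f (hist ++ [(x, f x)]) xs

section Learning

variable {X Y : Type*}

/-- The hypothesis `f` explains all answers of the history `hist`. -/
def ConsistentWith (f : X → Y) (hist : List (X × Y)) : Prop :=
  ∀ p ∈ hist, f p.1 = p.2

theorem ConsistentWith.append_self {f : X → Y} {hist : List (X × Y)}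
    (hf : ConsistentWith f hist) (x : X) : ConsistentWith f (hist ++ [(x, f x)]) := by
  intro p hp
  rcases List.mem_append.1 hp with hp | hp
  · exact hf p hp
  · rw [List.mem_singleton.1 hp]

theorem stdMistakes_le_of_potential {L : List (X × Y) → X → Y} {f : X → Y}
    (Φ : List (X × Y) → ℕ) (hmono : ∀ hist x, Φ (hist ++ [(x, f x)]) ≤ Φ hist)
    (hlt : ∀ hist x, ConsistentWith f hist → L hist x ≠ f x →
      Φ (hist ++ [(x, f x)]) < Φ hist)
    {hist : List (X × Y)} (hf : ConsistentWith f hist) (xs : List X) :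
    stdMistakes L f hist xs ≤ Φ hist := by
  induction xs generalizing hist with
  | nil => exact Nat.zero_le _
  | cons x xs ih =>
    have hrec := ih (hf.append_self x)
    rw [stdMistakes]
    split_ifs with hguess
    · have := hmono hist x
      lia
    · have := hlt hist x hf hguess
      lia

open Classical in
/-- The learner for the class `F` that gives the answer common to all consistent hypotheses in `F`
when there is one, and the default answer `y₀` otherwise. -/
noncomputable def conservativeLearner (F : Set (X → Y)) (y₀ : Y) (hist : List (X × Y)) (x : X) :
    Y :=
  if h : ∃ y, ∀ g ∈ F, ConsistentWith g hist → g x = y then h.choose else y₀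

theorem exists_consistentWith_of_conservativeLearner_ne {F : Set (X → Y)} {y₀ : Y}
    {hist : List (X × Y)} {x : X} {f : X → Y} (hfF : f ∈ F) (hf : ConsistentWith f hist)
    (hne : conservativeLearner F y₀ hist x ≠ f x) :
    f x ≠ y₀ ∧ ∃ g ∈ F, ConsistentWith g hist ∧ g x ≠ f x := by
  by_cases h : ∃ y, ∀ g ∈ F, ConsistentWith g hist → g x = y
  · rw [conservativeLearner, dif_pos h] at hne
    exact absurd (h.choose_spec f hfF hf).symm hne
  · rw [conservativeLearner, dif_neg h] at hne
    push Not at h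
    exact ⟨hne.symm, h (f x)⟩

end Learning

section VanishingOn

variable {K X : Type*} [DivisionRing K]

/-- The subspace of those functions in `W` that vanish at every point of `S`. -/
def vanishingOn (W : Submodule K (X → K)) (S : Set X) : Submodule K (X → K) :=
  W ⊓ Submodule.pi S fun _ ↦ ⊥

theorem mem_vanishingOn {W : Submodule K (X → K)} {S : Set X} {w : X → K} :
    w ∈ vanishingOn W S ↔ w ∈ W ∧ ∀ x ∈ S, w x = 0 :=
  Iff.rfl

theorem vanishingOn_le (W : Submodule K (X → K)) (S : Set X) : vanishingOn W S ≤ W :=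
  inf_le_left

theorem vanishingOn_anti (W : Submodule K (X → K)) {S T : Set X} (hST : S ⊆ T) :
    vanishingOn W T ≤ vanishingOn W S :=
  fun _ hw ↦ ⟨hw.1, fun x hx ↦ hw.2 x (hST hx)⟩

instance finiteDimensional_vanishingOn (W : Submodule K (X → K)) [FiniteDimensional K W]
    (S : Set X) : FiniteDimensional K (vanishingOn W S) :=
  Submodule.finiteDimensional_of_le (vanishingOn_le W S)

theorem finrank_le_finrank_vanishingOn_singleton_add_one (W : Submodule K (X → K))
    [FiniteDimensional K W] (x : X) :
    Module.finrank K W ≤ Module.finrank K (vanishingOn W {x}) + 1 := by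
  let ev : W →ₗ[K] K := LinearMap.proj x ∘ₗ W.subtype
  have hker : ev.ker.map W.subtype = vanishingOn W {x} := by
    ext w
    simp [ev, mem_vanishingOn, and_comm]
  have hrange : Module.finrank K ev.range ≤ 1 :=
    (Submodule.finrank_le _).trans_eq (Module.finrank_self K)
  have hrank := ev.finrank_range_add_finrank_ker
  rw [← hker, Submodule.finrank_map_subtype_eq]
  lia

end VanishingOn

section Relu

variable {K X : Type*} [DivisionRing K] [LinearOrder K]

/-- The class of all functions `x ↦ ReLU (w x)` with `w` in the function space `W`; the positive
part of a function is taken pointwise, so `w⁺ x = max (w x) 0`. -/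
def reluClass (W : Submodule K (X → K)) : Set (X → K) :=
  {f | ∃ w ∈ W, w⁺ = f}

/-- The inputs of a history that received a positive answer. -/
def positiveInputs (hist : List (X × K)) : Set X :=
  {x | ∃ y, 0 < y ∧ (x, y) ∈ hist}

theorem positiveInputs_subset_append (hist l : List (X × K)) :
    positiveInputs hist ⊆ positiveInputs (hist ++ l) :=
  fun _ ⟨y, hy, hmem⟩ ↦ ⟨y, hy, List.mem_append_left l hmem⟩

theorem ConsistentWith.apply_eq_of_posPart {w : X → K} {hist : List (X × K)} {x : X} {y : K}
    (hw : ConsistentWith w⁺ hist) (hmem : (x, y) ∈ hist) (hy : 0 < y) : w x = y := by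
  have hxy : (w x)⁺ = y := hw (x, y) hmem
  rw [← hxy, posPart_eq_of_posPart_pos (hxy.symm ▸ hy)]

theorem ConsistentWith.sub_mem_vanishingOn_positiveInputs {W : Submodule K (X → K)}
    {w w' : X → K} {hist : List (X × K)} (hwW : w ∈ W) (hwW' : w' ∈ W)
    (hw : ConsistentWith w⁺ hist) (hw' : ConsistentWith w'⁺ hist) :
    w - w' ∈ vanishingOn W (positiveInputs hist) := by
  refine mem_vanishingOn.2 ⟨W.sub_mem hwW hwW', ?_⟩
  rintro x ⟨y, hy, hmem⟩
  rw [Pi.sub_apply, hw.apply_eq_of_posPart hmem hy, hw'.apply_eq_of_posPart hmem hy, sub_self]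

theorem vanishingOn_positiveInputs_append_lt {W : Submodule K (X → K)} {w w' : X → K}
    {hist : List (X × K)} {x : X} (hwW : w ∈ W) (hwW' : w' ∈ W)
    (hw : ConsistentWith w⁺ hist) (hw' : ConsistentWith w'⁺ hist)
    (hpos : 0 < w⁺ x) (hne : w'⁺ x ≠ w⁺ x) :
    vanishingOn W (positiveInputs (hist ++ [(x, w⁺ x)])) <
      vanishingOn W (positiveInputs hist) := by
  refine SetLike.lt_iff_le_and_exists.2
    ⟨vanishingOn_anti W (positiveInputs_subset_append hist _), w - w',
      hw.sub_mem_vanishingOn_positiveInputs hwW hwW' hw', fun hmem ↦ hne ?_⟩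
  have hx : x ∈ positiveInputs (hist ++ [(x, w⁺ x)]) := ⟨w⁺ x, hpos, by simp⟩
  have hzero : w x - w' x = 0 := (mem_vanishingOn.1 hmem).2 x hx
  rw [Pi.posPart_apply, Pi.posPart_apply, sub_eq_zero.1 hzero]

theorem stdMistakes_conservativeLearner_reluClass_le {W : Submodule K (X → K)}
    [FiniteDimensional K W] {f : X → K} (hf : f ∈ reluClass W) (xs : List X) :
    stdMistakes (conservativeLearner (reluClass W) 0) f [] xs ≤ Module.finrank K W := by
  obtain ⟨w, hwW, rfl⟩ := hf
  let Φ (hist : List (X × K)) := Module.finrank K (vanishingOn W (positiveInputs hist))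
  have hmono hist x : Φ (hist ++ [(x, w⁺ x)]) ≤ Φ hist :=
    Submodule.finrank_mono (vanishingOn_anti W (positiveInputs_subset_append hist _))
  have hlt hist x (hw : ConsistentWith w⁺ hist)
      (herr : conservativeLearner (reluClass W) 0 hist x ≠ w⁺ x) :
      Φ (hist ++ [(x, w⁺ x)]) < Φ hist := by
    obtain ⟨hne_zero, _, ⟨w', hwW', rfl⟩, hw', hne⟩ :=
      exists_consistentWith_of_conservativeLearner_ne (F := reluClass W) ⟨w, hwW, rfl⟩ hw herr
    have hpos : 0 < w⁺ x := (posPart_nonneg (w x)).lt_of_ne' hne_zero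
    exact Submodule.finrank_lt_finrank_of_lt
      (vanishingOn_positiveInputs_append_lt hwW hwW' hw hw' hpos hne)
  calc stdMistakes (conservativeLearner (reluClass W) 0) w⁺ [] xs
    _ ≤ Φ [] := stdMistakes_le_of_potential Φ hmono hlt (fun _ hp ↦ absurd hp List.not_mem_nil) xs
    _ ≤ Module.finrank K W := Submodule.finrank_mono (vanishingOn_le W _)

-- The translate by `w₀` carries the values already committed to: `W` only contains corrections
-- that leave them unchanged.
theorem exists_stdMistakes_posPart_add_eq [IsStrictOrderedRing K] (L : List (X × K) → X → K)
    (d : ℕ) (W : Submodule K (X → K)) [FiniteDimensional K W] (hd : d ≤ Module.finrank K W)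
    (w₀ : X → K) (hist : List (X × K)) :
    ∃ w ∈ W, ∃ xs : List X, stdMistakes L (w₀ + w)⁺ hist xs = d := by
  induction d generalizing W w₀ hist with
  | zero => exact ⟨0, W.zero_mem, [], rfl⟩
  | succ d ih =>
    have hW : W ≠ ⊥ := by
      rintro rfl
      simp at hd
    obtain ⟨u, huW, hu⟩ := W.exists_mem_ne_zero_of_ne_bot hW
    obtain ⟨x, hux⟩ := Function.ne_iff.1 hu
    obtain ⟨y, hy⟩ := exists_gt (max (L hist x) 0)
    obtain ⟨hLy, hy⟩ := max_lt_iff.1 hy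
    let u' := ((y - w₀ x) / u x) • u
    have hu' : w₀ x + u' x = y := by
      simp [u', div_mul_cancel₀ _ hux]
    have hd' : d ≤ Module.finrank K (vanishingOn W {x}) := by
      have := finrank_le_finrank_vanishingOn_singleton_add_one W x
      lia
    obtain ⟨w, hw, xs, hxs⟩ := ih (vanishingOn W {x}) hd' (w₀ + u') (hist ++ [(x, y)])
    obtain ⟨hwW, hwx⟩ := mem_vanishingOn.1 hw
    have hvalue : (w₀ + (u' + w))⁺ x = y := by
      simp [hwx, hu', hy.le, ← add_assoc]
    refine ⟨u' + w, W.add_mem (W.smul_mem _ huW) hwW, x :: xs, ?_⟩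
    rw [stdMistakes, hvalue, if_neg hLy.ne, ← add_assoc, hxs, add_comm]

theorem exists_mem_reluClass_finrank_le_stdMistakes [IsStrictOrderedRing K]
    (W : Submodule K (X → K)) [FiniteDimensional K W] (L : List (X × K) → X → K) :
    ∃ f ∈ reluClass W, ∃ xs : List X, Module.finrank K W ≤ stdMistakes L f [] xs := by
  obtain ⟨w, hw, xs, hxs⟩ := exists_stdMistakes_posPart_add_eq L _ W le_rfl 0 []
  rw [zero_add] at hxs
  exact ⟨w⁺, ⟨w, hw, rfl⟩, xs, hxs.ge⟩

theorem stmt2_general [IsStrictOrderedRing K] (W : Submodule K (X → K)) [FiniteDimensional K W] :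
    (∃ L : List (X × K) → X → K,
      ∀ f ∈ reluClass W, ∀ xs : List X, stdMistakes L f [] xs ≤ Module.finrank K W) ∧
    (∀ L : List (X × K) → X → K,
      ∃ f ∈ reluClass W, ∃ xs : List X, Module.finrank K W ≤ stdMistakes L f [] xs) :=
  ⟨⟨conservativeLearner (reluClass W) 0,
    fun _ hf ↦ stdMistakes_conservativeLearner_reluClass_le hf⟩,
    exists_mem_reluClass_finrank_le_stdMistakes W⟩

end Relu

section Affine

variable (K ι : Type*) [DivisionRing K] [Fintype ι]

/-- The parametrization `(v, b) ↦ (x ↦ v ⬝ᵥ x + b)` of the affine functions on `ι → K` by weights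
and bias. -/
def affineParam : (ι → K) × K →ₗ[K] (ι → K) → K where
  toFun p x := p.1 ⬝ᵥ x + p.2
  map_add' p q := by
    ext x
    simp only [Prod.fst_add, Prod.snd_add, add_dotProduct, Pi.add_apply]
    abel
  map_smul' c p := by
    ext x
    simp [mul_add]

theorem affineParam_injective : Function.Injective (affineParam K ι) := by
  classical
  rw [← LinearMap.ker_eq_bot, LinearMap.ker_eq_bot']
  rintro ⟨v, b⟩ h
  have hvalue x : v ⬝ᵥ x + b = 0 := congrFun h x
  have hb : b = 0 := by simpa using hvalue 0
  have hv : v = 0 := by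
    ext i
    simpa [hb] using hvalue (Pi.single i 1)
  rw [hv, hb, Prod.mk_zero_zero]

theorem finrank_range_affineParam :
    Module.finrank K (affineParam K ι).range = Fintype.card ι + 1 := by
  rw [LinearMap.finrank_range_of_inj (affineParam_injective K ι), Module.finrank_prod,
    Module.finrank_fintype_fun_eq_card, Module.finrank_self]

theorem reluClass_range_affineParam [LinearOrder K] :
    reluClass (affineParam K ι).range =
      {g | ∃ (v : ι → K) (b : K), ∀ x, g x = max ((∑ i, v i * x i) + b) 0} := by
  ext g
  constructor
  · rintro ⟨_, ⟨⟨v, b⟩, rfl⟩, rfl⟩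
    exact ⟨v, b, fun _ ↦ rfl⟩
  · rintro ⟨v, b, hg⟩
    exact ⟨affineParam K ι (v, b), LinearMap.mem_range_self _ _, funext fun x ↦ (hg x).symm⟩

end Affine

/-- the family of 1-layer relu neural networks x ↦ ReLU(v·x + b)
on ℝ^n has standard optimal mistake bound exactly n + 1. -/
theorem stmt2 (n : ℕ) (hn : 1 ≤ n)
    (F : Set ((Fin n → ℝ) → ℝ))
    (hF : F = {g | ∃ (v : Fin n → ℝ) (b : ℝ),
        ∀ x, g x = max ((∑ i, v i * x i) + b) 0}) :
    (∃ L : List ((Fin n → ℝ) × ℝ) → (Fin n → ℝ) → ℝ,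
      ∀ f ∈ F, ∀ xs : List (Fin n → ℝ), stdMistakes L f [] xs ≤ n + 1) ∧
    (∀ L : List ((Fin n → ℝ) × ℝ) → (Fin n → ℝ) → ℝ,
      ∃ f ∈ F, ∃ xs : List (Fin n → ℝ), n + 1 ≤ stdMistakes L f [] xs) := by
  rw [hF, ← reluClass_range_affineParam]
  simpa [finrank_range_affineParam] using stmt2_general (affineParam ℝ (Fin n)).range
end

section
/- Let Y be a finite set of size k ≥ 2, let F be a family of functions X → Y, and suppose opt_std(F) ≤ M for a natural number M. Then for every natural number η, opt_ag,weak(F, η) ≤ (M · ln(3k) + η · ln 3) / (−ln(1 − 1/(3k))). In particular, opt_ag,weak(F, η) = O((k ln k) · opt_std(F) + k · η), matching the known lower bound up to a constant factor. -/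
/- Number of mistakes made by a deterministic learner `L` in the bandit
(weak-feedback) online model, with hidden function `f`: the history records past
inputs, the learner's past guesses, and whether each guess was correct. -/
open Classical in
noncomputable def bsMistakes {X Y : Type*} (L : List (X × Y × Bool) → X → Y) (f : X → Y) :
    List (X × Y × Bool) → List X → ℕ
  | _, [] => 0
  | hist, x :: xs =>
      (if L hist x = f x then 0 else 1) +
        bsMistakes L f (hist ++ [(x, L hist x, if L hist x = f x then true else false)]) xs

/-!
An expert simulates the strong-feedback learner on a guessed history and regards a finite set of
inputs as noisy. When a value is refuted at `x`, each expert for which `x` is not noisy and whose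
prediction at `x` is now refuted is replaced by an expert for which `x` is noisy and, for every
value `z`, an expert that records `z` as the value at `x`; together they carry only a fraction of
its weight. Each expert for which `x` is noisy instead loses a factor `δ`. Averaging over the
values not yet refuted at `x` yields a guess whose refutation shrinks the total weight by `δ`.

Some expert always records only values of `f` and regards as noisy only points where `f` and `g`
differ. The simulated learner errs on each pair that it records, so its history has length at most
`M`, while at most `k` values are refuted at each noisy input. Its weight therefore stays above
`ρ ^ M * (ν * δ ^ k) ^ η`, where `ρ` and `ν` are the costs of recording a value and of declaring
an input noisy; after `t` mistakes it is at most `δ ^ t`. For `δ = (1 - 1 / (3 * k)) ^ 2`,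
`ρ = 1 / (12 * k)` and `ν = 1 / 4` one has `ρ ≥ (3 * k)⁻¹ ^ 2` and, by Bernoulli's inequality,
`ν * δ ^ k ≥ 3⁻¹ ^ 2`, so taking square roots gives
`(3 * k)⁻¹ ^ M * 3⁻¹ ^ η ≤ (1 - 1 / (3 * k)) ^ t`.
-/

namespace WeakAgnostic

open Finset

section Models

variable {X Y S : Type*}

theorem stdMistakes_append (L : List (X × Y) → X → Y) (f : X → Y) (hist : List (X × Y))
    (xs ys : List X) :
    stdMistakes L f hist (xs ++ ys) =
      stdMistakes L f hist xs + stdMistakes L f (hist ++ xs.map fun x => (x, f x)) ys := by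
  induction xs generalizing hist with
  | nil => simp [stdMistakes]
  | cons x xs ih => simp [stdMistakes, ih, add_assoc]

theorem bsMistakes_append_history (L : List (X × Y × Bool) → X → Y) (f : X → Y)
    (hist hist' : List (X × Y × Bool)) (xs : List X) :
    bsMistakes L f (hist ++ hist') xs = bsMistakes (fun h => L (hist ++ h)) f hist' xs := by
  induction xs generalizing hist' with
  | nil => rfl
  | cons x xs ih => simp only [bsMistakes, List.append_assoc, ih]

/-- The bandit learner that keeps a state of type `S`, initially `s`, guesses from it, and updates
it only after mistakes, using the input and the refuted guess. -/
def mistakeDriven (update : S → X → Y → S) (guess : S → X → Y) (s : S)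
    (hist : List (X × Y × Bool)) : X → Y :=
  guess (hist.foldl (fun s r => if r.2.2 then s else update s r.1 r.2.1) s)

variable {update : S → X → Y → S} {guess : S → X → Y} {f : X → Y} {s : S} {x : X}

theorem bsMistakes_mistakeDriven_cons_of_eq (h : guess s x = f x) (xs : List X) :
    bsMistakes (mistakeDriven update guess s) f [] (x :: xs) =
      bsMistakes (mistakeDriven update guess s) f [] xs := by
  have hguess : mistakeDriven update guess s [] x = f x := h
  rw [bsMistakes, if_pos hguess, if_pos hguess, zero_add, List.nil_append,
    ← List.append_nil [_], bsMistakes_append_history]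
  rfl

theorem bsMistakes_mistakeDriven_cons_of_ne (h : guess s x ≠ f x) (xs : List X) :
    bsMistakes (mistakeDriven update guess s) f [] (x :: xs) =
      1 + bsMistakes (mistakeDriven update guess (update s x (guess s x))) f [] xs := by
  have hguess : mistakeDriven update guess s [] x ≠ f x := h
  rw [bsMistakes, if_neg hguess, if_neg hguess, List.nil_append,
    ← List.append_nil [_], bsMistakes_append_history]
  rfl

theorem le_pow_bsMistakes_mul_potential {Inv : S → Prop} {Φ : S → ℝ} {c d : ℝ} (hd : 0 ≤ d)
    (hlower : ∀ s, Inv s → c ≤ Φ s)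
    (hinv : ∀ s x, Inv s → guess s x ≠ f x → Inv (update s x (guess s x)))
    (hdecay : ∀ s x, Inv s → guess s x ≠ f x → Φ (update s x (guess s x)) ≤ d * Φ s)
    (hs : Inv s) (xs : List X) :
    c ≤ d ^ bsMistakes (mistakeDriven update guess s) f [] xs * Φ s := by
  induction xs generalizing s with
  | nil => simpa [bsMistakes] using hlower s hs
  | cons x xs ih =>
    by_cases h : guess s x = f x
    · rw [bsMistakes_mistakeDriven_cons_of_eq h]
      exact ih hs
    · rw [bsMistakes_mistakeDriven_cons_of_ne h, add_comm, pow_succ, mul_assoc]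
      exact (ih (hinv s x hs h)).trans
        (mul_le_mul_of_nonneg_left (hdecay s x hs h) (pow_nonneg hd _))

/-- `hist` lists inputs on which the learner `L`, run against `f`, errs every time, with their
values under `f`. -/
def IsMistakeTrace (L : List (X × Y) → X → Y) (f : X → Y) (hist : List (X × Y)) : Prop :=
  ∃ xs : List X, hist = xs.map (fun x => (x, f x)) ∧ stdMistakes L f [] xs = xs.length

variable {L : List (X × Y) → X → Y} {hist : List (X × Y)}

theorem IsMistakeTrace.nil : IsMistakeTrace L f [] := ⟨[], rfl, rfl⟩

theorem IsMistakeTrace.append_singleton (h : IsMistakeTrace L f hist) (hx : L hist x ≠ f x) :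
    IsMistakeTrace L f (hist ++ [(x, f x)]) := by
  obtain ⟨xs, rfl, hxs⟩ := h
  refine ⟨xs ++ [x], by simp, ?_⟩
  simp [stdMistakes_append, hxs, stdMistakes, hx]

theorem IsMistakeTrace.length_le (h : IsMistakeTrace L f hist) {M : ℕ}
    (hM : ∀ xs, stdMistakes L f [] xs ≤ M) : hist.length ≤ M := by
  obtain ⟨xs, rfl, hxs⟩ := h
  rw [List.length_map, ← hxs]
  exact hM xs

end Models

/-- The weight factors for `k` possible values: an expert pays `value` for each recorded value,
`noise` for each input declared noisy, and `decay` for each value refuted at a noisy input. The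
inequality `budget` makes the total weight shrink by the factor `decay` at a well-chosen mistake:
refuting one of `r ≤ k` values in turn saves an expert `1 - (noise + k * value)` once, which has to
pay for `r * (1 - decay)`. -/
structure SplitRates (k : ℕ) where
  value : ℝ
  noise : ℝ
  decay : ℝ
  value_pos : 0 < value
  noise_pos : 0 < noise
  decay_pos : 0 < decay
  decay_le_one : decay ≤ 1
  budget : noise + k * value + k * (1 - decay) ≤ 1

namespace SplitRates

variable {k : ℕ} (R : SplitRates k)

theorem noise_add_mul_value_le_decay (hk : 1 ≤ k) : R.noise + k * R.value ≤ R.decay := by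
  have hk' : (1 : ℝ) ≤ k := by exact_mod_cast hk
  linarith [R.budget, le_mul_of_one_le_left (sub_nonneg.mpr R.decay_le_one) hk']

theorem value_le_one (hk : 1 ≤ k) : R.value ≤ 1 := by
  have hk' : (1 : ℝ) ≤ k := by exact_mod_cast hk
  linarith [R.noise_add_mul_value_le_decay hk, R.decay_le_one, R.noise_pos,
    le_mul_of_one_le_left R.value_pos.le hk']

theorem noise_le_one : R.noise ≤ 1 := by
  have hvalue : 0 ≤ k * R.value := mul_nonneg k.cast_nonneg R.value_pos.le
  have hdecay : 0 ≤ k * (1 - R.decay) :=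
    mul_nonneg k.cast_nonneg (sub_nonneg.mpr R.decay_le_one)
  linarith [R.budget]

theorem noise_mul_decay_pow_pos (n : ℕ) : 0 < R.noise * R.decay ^ n :=
  mul_pos R.noise_pos (pow_pos R.decay_pos n)

theorem noise_mul_decay_pow_le_noise (n : ℕ) : R.noise * R.decay ^ n ≤ R.noise :=
  mul_le_of_le_one_right R.noise_pos.le (pow_le_one₀ R.decay_pos.le R.decay_le_one)

theorem noise_mul_decay_pow_le_one (n : ℕ) : R.noise * R.decay ^ n ≤ 1 :=
  (R.noise_mul_decay_pow_le_noise n).trans R.noise_le_one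

end SplitRates

section Experts

/-- A guess about the hidden function: the strong-feedback learner has been fed `history`, whose
values are assumed correct, and the inputs in `noisy` are assumed to be points where the hidden
function differs from the member of the family. -/
structure Expert (X Y : Type*) where
  history : List (X × Y)
  noisy : Finset X

/-- An expert whose claims about `f` and its disagreement with `g` are true, and whose history
consists of mistakes of the strong-feedback learner. -/
structure Expert.Follows {X Y : Type*} (L : List (X × Y) → X → Y) (f g : X → Y)
    (e : Expert X Y) : Prop where
  isMistakeTrace : IsMistakeTrace L f e.history
  ne_of_mem_noisy : ∀ x ∈ e.noisy, f x ≠ g x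

theorem Expert.Follows.card_noisy_le {X Y : Type*} {L : List (X × Y) → X → Y} {f g : X → Y}
    {e : Expert X Y} (he : e.Follows L f g) {η : ℕ} (hfin : {x | f x ≠ g x}.Finite)
    (hη : {x | f x ≠ g x}.ncard ≤ η) : #e.noisy ≤ η := by
  rw [← Set.ncard_coe_finset]
  exact (Set.ncard_le_ncard (fun x hx => he.ne_of_mem_noisy x hx) hfin).trans hη

variable {X Y : Type*} [DecidableEq X] [DecidableEq Y]

/-- The table `excl` of refuted values, enlarged by the value `y` at the input `x`. -/
def exclude (excl : X → Finset Y) (x : X) (y : Y) : X → Finset Y :=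
  Function.update excl x (insert y (excl x))

theorem exclude_self (excl : X → Finset Y) (x : X) (y : Y) :
    exclude excl x y x = insert y (excl x) :=
  Function.update_self ..

theorem exclude_of_ne {x z : X} (h : z ≠ x) (excl : X → Finset Y) (y : Y) :
    exclude excl x y z = excl z :=
  Function.update_of_ne h ..

theorem notMem_exclude {excl : X → Finset Y} {g : X → Y} (h : ∀ z, g z ∉ excl z) {x : X} {y : Y}
    (hy : y ≠ g x) (z : X) : g z ∉ exclude excl x y z := by
  by_cases hz : z = x
  · subst hz
    simp [exclude_self, hy.symm, h z]
  · simp [exclude_of_ne hz, h z]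

variable [Fintype Y]

/-- The experts replacing `e` once its prediction at `x` is refuted: either `x` is noisy, or the
learner is fed some value at `x`. -/
def Expert.split (e : Expert X Y) (x : X) : Multiset (Expert X Y) :=
  ⟨e.history, insert x e.noisy⟩ ::ₘ
    (univ : Finset Y).val.map fun z => ⟨e.history ++ [(x, z)], e.noisy⟩

/-- The experts replacing `e` after a mistake at `x`, where `excl` is the table of refuted values
including the one just refuted. -/
def Expert.branch (L : List (X × Y) → X → Y) (excl : X → Finset Y) (x : X) (e : Expert X Y) :
    Multiset (Expert X Y) :=
  if x ∉ e.noisy ∧ L e.history x ∈ excl x then e.split x else {e}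

theorem Expert.Follows.exists_mem_branch {L : List (X × Y) → X → Y} {f g : X → Y}
    {excl : X → Finset Y} {x : X} {e : Expert X Y} (he : e.Follows L f g) (hg : g x ∉ excl x) :
    ∃ e' ∈ e.branch L excl x, e'.Follows L f g := by
  by_cases hsplit : x ∉ e.noisy ∧ L e.history x ∈ excl x
  · rw [Expert.branch, if_pos hsplit]
    by_cases hfg : f x = g x
    · have hmistake : L e.history x ≠ f x := fun h => hg (hfg ▸ h ▸ hsplit.2)
      exact ⟨⟨e.history ++ [(x, f x)], e.noisy⟩, by simp [Expert.split],
        he.isMistakeTrace.append_singleton hmistake, he.ne_of_mem_noisy⟩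
    · exact ⟨⟨e.history, insert x e.noisy⟩, Multiset.mem_cons_self _ _, he.isMistakeTrace,
        forall_mem_insert _ _ _ |>.mpr ⟨hfg, he.ne_of_mem_noisy⟩⟩
  · rw [Expert.branch, if_neg hsplit]
    exact ⟨e, Multiset.mem_singleton_self e, he⟩

end Experts

namespace SplitRates

section Weight

variable {X Y : Type*} {k : ℕ} (R : SplitRates k)

/-- The weight of an expert when `excl` is the table of refuted values. -/
noncomputable def weight (excl : X → Finset Y) (e : Expert X Y) : ℝ :=
  R.value ^ e.history.length * ∏ x ∈ e.noisy, (R.noise * R.decay ^ #(excl x))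

/-- The total weight of a collection of experts when `excl` is the table of refuted values. -/
noncomputable def totalWeight (excl : X → Finset Y) (E : Multiset (Expert X Y)) : ℝ :=
  (E.map (R.weight excl)).sum

theorem weight_pos (excl : X → Finset Y) (e : Expert X Y) : 0 < R.weight excl e :=
  mul_pos (pow_pos R.value_pos _) (prod_pos fun _ _ => R.noise_mul_decay_pow_pos _)

theorem weight_le_totalWeight (excl : X → Finset Y) {E : Multiset (Expert X Y)}
    {e : Expert X Y} (he : e ∈ E) : R.weight excl e ≤ R.totalWeight excl E := by
  refine Multiset.single_le_sum (fun w hw => ?_) _ (Multiset.mem_map_of_mem _ he)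
  obtain ⟨e', -, rfl⟩ := Multiset.mem_map.mp hw
  exact (R.weight_pos excl e').le

theorem totalWeight_bind (excl : X → Finset Y) (E : Multiset (Expert X Y))
    (φ : Expert X Y → Multiset (Expert X Y)) :
    R.totalWeight excl (E.bind φ) = (E.map fun e => R.totalWeight excl (φ e)).sum := by
  simp only [totalWeight, Multiset.map_bind, Multiset.sum_bind]

theorem weight_append_singleton (excl : X → Finset Y) (h : List (X × Y)) (p : X × Y)
    (N : Finset X) : R.weight excl ⟨h ++ [p], N⟩ = R.value * R.weight excl ⟨h, N⟩ := by
  simp only [weight, List.length_append, List.length_singleton, pow_succ]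
  ring

variable [DecidableEq X]

theorem weight_insert (excl : X → Finset Y) (h : List (X × Y)) {N : Finset X} {x : X}
    (hx : x ∉ N) :
    R.weight excl ⟨h, insert x N⟩ =
      R.noise * R.decay ^ #(excl x) * R.weight excl ⟨h, N⟩ := by
  simp only [weight, prod_insert hx]
  ring

variable [DecidableEq Y]

theorem weight_exclude_of_notMem_noisy (excl : X → Finset Y) {x : X} (y : Y) {e : Expert X Y}
    (hx : x ∉ e.noisy) : R.weight (exclude excl x y) e = R.weight excl e := by
  unfold weight
  congr 1
  refine prod_congr rfl fun z hz => ?_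
  rw [exclude_of_ne (ne_of_mem_of_not_mem hz hx)]

theorem weight_exclude_of_mem_noisy {excl : X → Finset Y} {x : X} {y : Y} {e : Expert X Y}
    (hx : x ∈ e.noisy) (hy : y ∉ excl x) :
    R.weight (exclude excl x y) e = R.decay * R.weight excl e := by
  obtain ⟨h, noisy⟩ := e
  have hnot := notMem_erase x noisy
  have hx' : insert x (noisy.erase x) = noisy := insert_erase hx
  rw [← hx', R.weight_insert _ _ hnot, R.weight_insert _ _ hnot,
    R.weight_exclude_of_notMem_noisy _ _ hnot, exclude_self, card_insert_of_notMem hy, pow_succ]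
  ring

end Weight

variable {X Y : Type*} [Fintype Y] (R : SplitRates (Fintype.card Y))

theorem pow_mul_pow_le_weight [Nonempty Y] (excl : X → Finset Y) {e : Expert X Y} {M η : ℕ}
    (hM : e.history.length ≤ M) (hη : #e.noisy ≤ η) :
    R.value ^ M * (R.noise * R.decay ^ Fintype.card Y) ^ η ≤ R.weight excl e := by
  have hfactor : ∀ x ∈ e.noisy,
      R.noise * R.decay ^ Fintype.card Y ≤ R.noise * R.decay ^ #(excl x) := fun x _ =>
    mul_le_mul_of_nonneg_left
      (pow_le_pow_of_le_one R.decay_pos.le R.decay_le_one (card_le_univ _)) R.noise_pos.le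
  have hpos := R.noise_mul_decay_pow_pos (Fintype.card Y)
  refine mul_le_mul (pow_le_pow_of_le_one R.value_pos.le (R.value_le_one Fintype.card_pos) hM) ?_
    (pow_nonneg hpos.le _) (pow_nonneg R.value_pos.le _)
  calc (R.noise * R.decay ^ Fintype.card Y) ^ η
      ≤ (R.noise * R.decay ^ Fintype.card Y) ^ #e.noisy :=
        pow_le_pow_of_le_one hpos.le (R.noise_mul_decay_pow_le_one _) hη
    _ = ∏ _x ∈ e.noisy, R.noise * R.decay ^ Fintype.card Y := (prod_const _).symm
    _ ≤ ∏ x ∈ e.noisy, (R.noise * R.decay ^ #(excl x)) :=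
        prod_le_prod (fun _ _ => hpos.le) hfactor

variable [DecidableEq X]

theorem totalWeight_split_le (excl : X → Finset Y) {e : Expert X Y} {x : X} (hx : x ∉ e.noisy) :
    R.totalWeight excl (e.split x) ≤
      (R.noise + Fintype.card Y * R.value) * R.weight excl e := by
  have hnoise : R.weight excl ⟨e.history, insert x e.noisy⟩ ≤ R.noise * R.weight excl e := by
    rw [R.weight_insert excl _ hx]
    exact mul_le_mul_of_nonneg_right (R.noise_mul_decay_pow_le_noise _) (R.weight_pos excl e).le
  have hvalues : ((univ : Finset Y).val.map fun z =>
      R.weight excl ⟨e.history ++ [(x, z)], e.noisy⟩).sum =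
      Fintype.card Y * R.value * R.weight excl e := by
    simp only [weight_append_singleton, sum_map_val, sum_const, card_univ, nsmul_eq_mul, mul_assoc]
  simp only [totalWeight, Expert.split, Multiset.map_cons, Multiset.sum_cons, Multiset.map_map,
    Function.comp_def, hvalues]
  linarith

variable [DecidableEq Y] (L : List (X × Y) → X → Y) {excl : X → Finset Y} {x : X} {y : Y}
  {e : Expert X Y}

theorem totalWeight_branch_of_mem_noisy (hx : x ∈ e.noisy) (hy : y ∉ excl x) :
    R.totalWeight (exclude excl x y) (e.branch L (exclude excl x y) x) =
      R.decay * R.weight excl e := by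
  rw [Expert.branch, if_neg fun h => h.1 hx, totalWeight, Multiset.map_singleton,
    Multiset.sum_singleton, R.weight_exclude_of_mem_noisy hx hy]

theorem totalWeight_branch_le_of_mem (hx : x ∉ e.noisy)
    (hL : L e.history x ∈ exclude excl x y x) :
    R.totalWeight (exclude excl x y) (e.branch L (exclude excl x y) x) ≤
      (R.noise + Fintype.card Y * R.value) * R.weight excl e := by
  rw [Expert.branch, if_pos ⟨hx, hL⟩, ← R.weight_exclude_of_notMem_noisy excl y hx]
  exact R.totalWeight_split_le _ hx

theorem totalWeight_branch_of_notMem (hx : x ∉ e.noisy)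
    (hL : L e.history x ∉ exclude excl x y x) :
    R.totalWeight (exclude excl x y) (e.branch L (exclude excl x y) x) = R.weight excl e := by
  rw [Expert.branch, if_neg fun h => hL h.2, totalWeight, Multiset.map_singleton,
    Multiset.sum_singleton, R.weight_exclude_of_notMem_noisy excl y hx]

theorem sum_totalWeight_branch_le_of_notMem (hx : x ∉ e.noisy) (hL : L e.history x ∉ excl x) :
    ∑ y ∈ (excl x)ᶜ, R.totalWeight (exclude excl x y) (e.branch L (exclude excl x y) x) ≤
      #(excl x)ᶜ * (R.decay * R.weight excl e) := by
  set saving := (1 - (R.noise + Fintype.card Y * R.value)) * R.weight excl e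
  have hterm : ∀ y ∈ (excl x)ᶜ,
      R.totalWeight (exclude excl x y) (e.branch L (exclude excl x y) x) ≤
        R.weight excl e - if L e.history x = y then saving else 0 := fun y _ => by
    by_cases hy : L e.history x = y
    · rw [if_pos hy]
      linarith [R.totalWeight_branch_le_of_mem L hx
        (show L e.history x ∈ exclude excl x y x by simp [exclude_self, hy])]
    · rw [if_neg hy, sub_zero, R.totalWeight_branch_of_notMem L hx (by simp [exclude_self, hy, hL])]
  have hbudget : #(excl x)ᶜ * (1 - R.decay) ≤ 1 - (R.noise + Fintype.card Y * R.value) := by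
    have hcard : (#(excl x)ᶜ : ℝ) ≤ Fintype.card Y := by exact_mod_cast card_le_univ _
    linarith [R.budget, mul_le_mul_of_nonneg_right hcard (sub_nonneg.mpr R.decay_le_one)]
  calc ∑ y ∈ (excl x)ᶜ, R.totalWeight (exclude excl x y) (e.branch L (exclude excl x y) x)
      ≤ ∑ y ∈ (excl x)ᶜ, (R.weight excl e - if L e.history x = y then saving else 0) :=
        sum_le_sum hterm
    _ = #(excl x)ᶜ * R.weight excl e - saving := by
        rw [sum_sub_distrib, sum_const, nsmul_eq_mul, sum_ite_eq, if_pos (mem_compl.mpr hL)]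
    _ ≤ #(excl x)ᶜ * (R.decay * R.weight excl e) := by
        linarith [mul_le_mul_of_nonneg_right hbudget (R.weight_pos excl e).le]

theorem sum_totalWeight_branch_le (excl : X → Finset Y) (x : X) (e : Expert X Y) :
    ∑ y ∈ (excl x)ᶜ, R.totalWeight (exclude excl x y) (e.branch L (exclude excl x y) x) ≤
      #(excl x)ᶜ * (R.decay * R.weight excl e) := by
  by_cases hx : x ∈ e.noisy
  · rw [← nsmul_eq_mul]
    exact sum_le_card_nsmul _ _ _ fun y hy =>
      (R.totalWeight_branch_of_mem_noisy L hx (mem_compl.mp hy)).le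
  by_cases hL : L e.history x ∈ excl x
  · have hk : 1 ≤ Fintype.card Y := Fintype.card_pos_iff.mpr ⟨L e.history x⟩
    rw [← nsmul_eq_mul]
    refine sum_le_card_nsmul _ _ _ fun y _ => ?_
    refine (R.totalWeight_branch_le_of_mem L hx (by simp [exclude_self, hL])).trans ?_
    exact mul_le_mul_of_nonneg_right (R.noise_add_mul_value_le_decay hk) (R.weight_pos excl e).le
  · exact R.sum_totalWeight_branch_le_of_notMem L hx hL

end SplitRates

section Learner

variable {X Y : Type*}

/-- The memory of the bandit learner: the values refuted so far at each input, and the current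
experts. -/
structure State (X Y : Type*) where
  excl : X → Finset Y
  experts : Multiset (Expert X Y)

namespace State

/-- The state in which nothing is refuted and a single expert makes no claim. -/
def init (X Y : Type*) : State X Y := ⟨fun _ => ∅, {⟨[], ∅⟩}⟩

/-- The invariant of the learner facing `g`: no true value is refuted, and some expert is right
about `f` and `g`. -/
structure Tracks (L : List (X × Y) → X → Y) (f g : X → Y) (s : State X Y) : Prop where
  notMem_excl : ∀ x, g x ∉ s.excl x
  exists_follows : ∃ e ∈ s.experts, e.Follows L f g

theorem tracks_init (L : List (X × Y) → X → Y) (f g : X → Y) : (init X Y).Tracks L f g where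
  notMem_excl _ := notMem_empty _
  exists_follows := ⟨_, Multiset.mem_singleton_self _, IsMistakeTrace.nil, by simp⟩

variable [Fintype Y] [DecidableEq X] [DecidableEq Y]

/-- The state after a guess `y` at `x` turned out wrong. -/
def refute (L : List (X × Y) → X → Y) (s : State X Y) (x : X) (y : Y) : State X Y :=
  ⟨exclude s.excl x y, s.experts.bind (Expert.branch L (exclude s.excl x y) x)⟩

theorem Tracks.refute {L : List (X × Y) → X → Y} {f g : X → Y} {s : State X Y}
    (hs : s.Tracks L f g) {x : X} {y : Y} (hy : y ≠ g x) : (s.refute L x y).Tracks L f g := by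
  have hexcl := notMem_exclude hs.notMem_excl hy
  obtain ⟨e, he, hfollows⟩ := hs.exists_follows
  obtain ⟨e', he', hfollows'⟩ := hfollows.exists_mem_branch (hexcl x)
  exact ⟨hexcl, e', Multiset.mem_bind.mpr ⟨e, he, he'⟩, hfollows'⟩

end State

namespace SplitRates

section Potential

variable {k : ℕ} (R : SplitRates k)

/-- The total weight of the experts of a state, the potential of the mistake bound. -/
noncomputable def potential (s : State X Y) : ℝ := R.totalWeight s.excl s.experts

theorem potential_init : R.potential (State.init X Y) = 1 := by
  simp [potential, totalWeight, weight, State.init]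

end Potential

variable [Fintype Y] (R : SplitRates (Fintype.card Y))

theorem pow_mul_pow_le_potential [Nonempty Y] {L : List (X × Y) → X → Y} {f g : X → Y}
    {s : State X Y} (hs : s.Tracks L f g) {M η : ℕ} (hM : ∀ xs, stdMistakes L f [] xs ≤ M)
    (hfin : {x | f x ≠ g x}.Finite) (hη : {x | f x ≠ g x}.ncard ≤ η) :
    R.value ^ M * (R.noise * R.decay ^ Fintype.card Y) ^ η ≤ R.potential s := by
  obtain ⟨e, he, hfollows⟩ := hs.exists_follows
  exact (R.pow_mul_pow_le_weight s.excl (hfollows.isMistakeTrace.length_le hM)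
    (hfollows.card_noisy_le hfin hη)).trans (R.weight_le_totalWeight s.excl he)

variable [DecidableEq X] [DecidableEq Y] (L : List (X × Y) → X → Y)

theorem sum_potential_refute_le (s : State X Y) (x : X) :
    ∑ y ∈ (s.excl x)ᶜ, R.potential (s.refute L x y) ≤
      #(s.excl x)ᶜ * (R.decay * R.potential s) := by
  simp only [potential, State.refute, totalWeight_bind, ← Multiset.sum_map_sum]
  calc (s.experts.map fun e => ∑ y ∈ (s.excl x)ᶜ,
        R.totalWeight (exclude s.excl x y) (e.branch L (exclude s.excl x y) x)).sum
      ≤ (s.experts.map fun e => #(s.excl x)ᶜ * (R.decay * R.weight s.excl e)).sum :=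
        Multiset.sum_map_le_sum_map _ _ fun e _ => R.sum_totalWeight_branch_le L s.excl x e
    _ = #(s.excl x)ᶜ * (R.decay * R.totalWeight s.excl s.experts) := by
        simp only [totalWeight, Multiset.sum_map_mul_left]

theorem exists_potential_refute_le (s : State X Y) {x : X} (hx : (s.excl x)ᶜ.Nonempty) :
    ∃ y, R.potential (s.refute L x y) ≤ R.decay * R.potential s := by
  obtain ⟨y, -, hy⟩ := exists_le_of_sum_le hx
    (g := fun _ => R.decay * R.potential s)
    (by simpa only [sum_const, nsmul_eq_mul] using R.sum_potential_refute_le L s x)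
  exact ⟨y, hy⟩

variable [Nonempty Y]

/-- A value whose refutation at `x` shrinks the potential by the factor `decay`; it exists as long
as some value at `x` is not refuted, and is arbitrary otherwise. -/
noncomputable def guess (s : State X Y) (x : X) : Y :=
  Classical.epsilon fun y => R.potential (s.refute L x y) ≤ R.decay * R.potential s

/-- The bandit learner obtained from the strong-feedback learner `L`. -/
noncomputable def learner : List (X × Y × Bool) → X → Y :=
  mistakeDriven (State.refute L) (R.guess L) (State.init X Y)

variable {L}

theorem potential_refute_guess_le {f g : X → Y} {s : State X Y} (hs : s.Tracks L f g) (x : X) :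
    R.potential (s.refute L x (R.guess L s x)) ≤ R.decay * R.potential s :=
  Classical.epsilon_spec
    (R.exists_potential_refute_le L s ⟨g x, mem_compl.mpr (hs.notMem_excl x)⟩)

theorem pow_mul_pow_le_decay_pow_bsMistakes {f g : X → Y} {M η : ℕ}
    (hM : ∀ xs, stdMistakes L f [] xs ≤ M) (hfin : {x | f x ≠ g x}.Finite)
    (hη : {x | f x ≠ g x}.ncard ≤ η) (xs : List X) :
    R.value ^ M * (R.noise * R.decay ^ Fintype.card Y) ^ η ≤
      R.decay ^ bsMistakes (R.learner L) g [] xs := by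
  have h := le_pow_bsMistakes_mul_potential (update := State.refute L) (guess := R.guess L)
    (Inv := State.Tracks L f g) (Φ := R.potential) R.decay_pos.le
    (fun _ hs => R.pow_mul_pow_le_potential hs hM hfin hη)
    (fun _ _ hs hx => hs.refute hx)
    (fun _ x hs _ => R.potential_refute_guess_le hs x)
    (State.tracks_init L f g) xs
  rwa [potential_init, mul_one] at h

end SplitRates

end Learner

section Numerics

variable {k : ℕ}

theorem one_div_three_mul_le (hk : 1 ≤ k) : 1 / (3 * (k : ℝ)) ≤ 1 / 3 := by
  have hk' : (1 : ℝ) ≤ k := by exact_mod_cast hk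
  exact one_div_le_one_div_of_le (by norm_num) (by linarith)

theorem mul_one_div_three_mul (hk : 1 ≤ k) : (k : ℝ) * (1 / (3 * k)) = 1 / 3 := by
  have hk' : (k : ℝ) ≠ 0 := by positivity
  field_simp

/-- The rates that give the constants of the theorem. -/
noncomputable def standardRates (hk : 1 ≤ k) : SplitRates k where
  value := 1 / (12 * k)
  noise := 1 / 4
  decay := (1 - 1 / (3 * k)) ^ 2
  value_pos := by positivity
  noise_pos := by norm_num
  decay_pos := pow_pos (by linarith [one_div_three_mul_le hk]) 2
  decay_le_one := pow_le_one₀ (by linarith [one_div_three_mul_le hk]) <|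
    sub_le_self _ (by positivity)
  budget := by
    have hvalue : (k : ℝ) * (1 / (12 * k)) = 1 / 12 := by
      have hk' : (k : ℝ) ≠ 0 := by positivity
      field_simp
    have hdecay : (k : ℝ) * (1 - (1 - 1 / (3 * k)) ^ 2) ≤ 2 / 3 :=
      calc (k : ℝ) * (1 - (1 - 1 / (3 * k)) ^ 2)
          = 2 * ((k : ℝ) * (1 / (3 * k))) - k * (1 / (3 * k)) ^ 2 := by ring
        _ ≤ 2 * ((k : ℝ) * (1 / (3 * k))) := sub_le_self _ (by positivity)
        _ = 2 / 3 := by rw [mul_one_div_three_mul hk]; norm_num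
    linarith

theorem sq_inv_le_value_standardRates (hk : 2 ≤ k) :
    ((3 * (k : ℝ))⁻¹) ^ 2 ≤ (standardRates (one_le_two.trans hk)).value := by
  have hk' : (2 : ℝ) ≤ k := by exact_mod_cast hk
  change _ ≤ 1 / (12 * (k : ℝ))
  rw [inv_pow, one_div]
  exact inv_anti₀ (by positivity) (by nlinarith)

theorem sq_inv_three_le_noise_mul_decay_pow_standardRates (hk : 1 ≤ k) :
    (3⁻¹ : ℝ) ^ 2 ≤ (standardRates hk).noise * (standardRates hk).decay ^ k := by
  have hbernoulli : 2 / 3 ≤ (1 - 1 / (3 * (k : ℝ))) ^ k :=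
    calc (2 / 3 : ℝ) = 1 + k * -(1 / (3 * k)) := by
          rw [mul_neg, mul_one_div_three_mul hk]; norm_num
      _ ≤ (1 + -(1 / (3 * (k : ℝ)))) ^ k :=
          one_add_mul_le_pow (by linarith [one_div_three_mul_le hk]) k
      _ = _ := by rw [← sub_eq_add_neg]
  calc (3⁻¹ : ℝ) ^ 2 = 1 / 4 * (2 / 3) ^ 2 := by norm_num
    _ ≤ 1 / 4 * ((1 - 1 / (3 * (k : ℝ))) ^ k) ^ 2 := by gcongr
    _ = 1 / 4 * ((1 - 1 / (3 * (k : ℝ))) ^ 2) ^ k := by rw [pow_right_comm]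

theorem pow_mul_pow_le_pow_of_sq_le {a b c d q : ℝ} (hc : a ^ 2 ≤ c) (hd : b ^ 2 ≤ d)
    (hq : 0 ≤ q) {M η t : ℕ} (h : c ^ M * d ^ η ≤ (q ^ 2) ^ t) : a ^ M * b ^ η ≤ q ^ t := by
  have hc0 : 0 ≤ c := (sq_nonneg a).trans hc
  refine le_of_sq_le_sq ?_ (pow_nonneg hq t)
  calc (a ^ M * b ^ η) ^ 2 = (a ^ 2) ^ M * (b ^ 2) ^ η := by ring
    _ ≤ c ^ M * d ^ η := by gcongr
    _ ≤ (q ^ 2) ^ t := h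
    _ = (q ^ t) ^ 2 := pow_right_comm ..

theorem cast_le_div_neg_log {a b q : ℝ} (ha : 0 < a) (hb : 0 < b) (hq0 : 0 < q) (hq1 : q < 1)
    {M η t : ℕ} (h : a⁻¹ ^ M * b⁻¹ ^ η ≤ q ^ t) :
    (t : ℝ) ≤ (M * Real.log a + η * Real.log b) / (-Real.log q) := by
  have hlog := Real.log_le_log (by positivity) h
  rw [Real.log_mul (by positivity) (by positivity), Real.log_pow, Real.log_pow, Real.log_pow,
    Real.log_inv, Real.log_inv] at hlog
  rw [le_div_iff₀ (neg_pos.mpr (Real.log_neg hq0 hq1))]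
  linarith

end Numerics

end WeakAgnostic

/-- if opt_std(F) ≤ M and the codomain has size k ≥ 2, then the weak
(bandit-feedback) agnostic mistake bound with noise η is at most
(M ln(3k) + η ln 3) / (−ln(1 − 1/(3k))). -/
theorem stmt8 {X Y : Type*} [Fintype Y] (k : ℕ) (hk : 2 ≤ k)
    (hcard : Fintype.card Y = k) (F : Set (X → Y)) (M η : ℕ)
    (hstd : ∃ L : List (X × Y) → X → Y, ∀ f ∈ F, ∀ xs : List X,
      stdMistakes L f [] xs ≤ M) :
    ∃ L : List (X × Y × Bool) → X → Y, ∀ g : X → Y,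
      (∃ f ∈ F, {x | f x ≠ g x}.Finite ∧ {x | f x ≠ g x}.ncard ≤ η) →
      ∀ xs : List X, (bsMistakes L g [] xs : ℝ) ≤
        (M * Real.log (3 * k) + η * Real.log 3) / (-Real.log (1 - 1 / (3 * k))) := by
  classical
  subst hcard
  obtain ⟨L, hL⟩ := hstd
  have hk1 : 1 ≤ Fintype.card Y := by omega
  have : Nonempty Y := Fintype.card_pos_iff.mp hk1
  let R := WeakAgnostic.standardRates hk1
  have hbase := WeakAgnostic.one_div_three_mul_le hk1
  refine ⟨R.learner L, fun g ⟨f, hf, hfin, hη⟩ xs => ?_⟩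
  have hmistakes := R.pow_mul_pow_le_decay_pow_bsMistakes (hL f hf) hfin hη xs
  have hroot := WeakAgnostic.pow_mul_pow_le_pow_of_sq_le
    (WeakAgnostic.sq_inv_le_value_standardRates hk)
    (WeakAgnostic.sq_inv_three_le_noise_mul_decay_pow_standardRates hk1)
    (by linarith) hmistakes
  exact WeakAgnostic.cast_le_div_neg_log (by positivity) three_pos (by linarith)
    (sub_lt_self 1 (by positivity)) hroot
end

section
/- Let k be a prime power and n ≥ 2 an integer, and let F*_{k,n} be the combined family defined on the disjoint union 𝔽_k^n ⊔ ℤ. Then opt_std(F*_{k,n}) ≤ 2n: some deterministic learner makes at most 2n mistakes for every hidden f ∈ F*_{k,n} and every finite input sequence in the standard online model. -/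
/- The family F_{k,n} of functions ℤ → 𝔽 that are 0 on all but at most n inputs. -/
def FewSupp (𝔽 : Type*) [Zero 𝔽] (n : ℕ) : Set (ℤ → 𝔽) :=
  {h | {x : ℤ | h x ≠ 0}.Finite ∧ {x : ℤ | h x ≠ 0}.ncard ≤ n}

/- The family F_L(k,n) of linear functionals 𝔽^n → 𝔽. -/
def LinFam (𝔽 : Type*) [Field 𝔽] (n : ℕ) : Set ((Fin n → 𝔽) → 𝔽) :=
  {f | ∃ α : Fin n → 𝔽, f = fun x => ∑ i, α i * x i}

/- The combined family F*_{k,n} on the disjoint union 𝔽^n ⊔ ℤ. -/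
def CombFam (𝔽 : Type*) [Field 𝔽] (n : ℕ) : Set (((Fin n → 𝔽) ⊕ ℤ) → 𝔽) :=
  {f | ∃ (α : Fin n → 𝔽) (h : ℤ → 𝔽), h ∈ FewSupp 𝔽 n ∧
    f = Sum.elim (fun x => ∑ i, α i * x i) h}

/-!
Mistake bounds add over disjoint unions: the learner runs one learner per summand, each on its own
part of the history. A learner guessing with a linear map that agrees with the history errs only
at vectors outside the span of those already seen, so each mistake raises the dimension of that
span. A learner that repeats known values and otherwise follows a reference function `g` errs only
at unseen points where the hidden function deviates from `g`.
-/

section Learning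

variable {X Y : Type*}

/-- The assertion `opt_std(F) ≤ M` that some deterministic learner makes at most `M` mistakes on
every function of the family `F`. -/
def HasMistakeBound (F : Set (X → Y)) (M : ℕ) : Prop :=
  ∃ L : List (X × Y) → X → Y, ∀ f ∈ F, ∀ xs : List X, stdMistakes L f [] xs ≤ M

theorem HasMistakeBound.mono {F G : Set (X → Y)} {M : ℕ} (hG : HasMistakeBound G M)
    (hFG : F ⊆ G) : HasMistakeBound F M :=
  hG.imp fun _ hL f hf ↦ hL f (hFG hf)

theorem stdMistakes_add_progress_le {L : List (X × Y) → X → Y} {f : X → Y} (Ψ : List X → ℕ)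
    (le_append : ∀ seen x, Ψ seen ≤ Ψ (seen ++ [x]))
    (lt_append : ∀ seen x, L (seen.map fun y ↦ (y, f y)) x ≠ f x → Ψ seen < Ψ (seen ++ [x]))
    (seen xs : List X) :
    stdMistakes L f (seen.map fun y ↦ (y, f y)) xs + Ψ seen ≤ Ψ (seen ++ xs) := by
  induction xs generalizing seen with
  | nil => simp [stdMistakes]
  | cons x xs ih =>
    have hrest := ih (seen ++ [x])
    rw [List.map_append, List.map_singleton, List.append_assoc, List.singleton_append] at hrest
    rw [stdMistakes]
    split_ifs with hguess
    · have := le_append seen x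
      omega
    · have := lt_append seen x hguess
      omega

theorem stdMistakes_le_of_progress {L : List (X × Y) → X → Y} {f : X → Y} {M : ℕ}
    (Ψ : List X → ℕ) (le_append : ∀ seen x, Ψ seen ≤ Ψ (seen ++ [x]))
    (lt_append : ∀ seen x, L (seen.map fun y ↦ (y, f y)) x ≠ f x → Ψ seen < Ψ (seen ++ [x]))
    (le_bound : ∀ seen, Ψ seen ≤ M) (xs : List X) : stdMistakes L f [] xs ≤ M :=
  (Nat.le_add_right _ _).trans <|
    (stdMistakes_add_progress_le Ψ le_append lt_append [] xs).trans (le_bound _)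

end Learning

section Sum

variable {X₁ X₂ Y : Type*}

/-- The part of a history on `X₁ ⊕ X₂` whose inputs lie in `X₁`. -/
def leftHistory (hist : List ((X₁ ⊕ X₂) × Y)) : List (X₁ × Y) :=
  hist.filterMap fun p ↦ p.1.getLeft?.map (·, p.2)

/-- The part of a history on `X₁ ⊕ X₂` whose inputs lie in `X₂`. -/
def rightHistory (hist : List ((X₁ ⊕ X₂) × Y)) : List (X₂ × Y) :=
  hist.filterMap fun p ↦ p.1.getRight?.map (·, p.2)

theorem leftHistory_append_inl (hist : List ((X₁ ⊕ X₂) × Y)) (x : X₁) (y : Y) :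
    leftHistory (hist ++ [(Sum.inl x, y)]) = leftHistory hist ++ [(x, y)] := by
  simp [leftHistory]

theorem leftHistory_append_inr (hist : List ((X₁ ⊕ X₂) × Y)) (x : X₂) (y : Y) :
    leftHistory (hist ++ [(Sum.inr x, y)]) = leftHistory hist := by
  simp [leftHistory, List.filterMap_cons]

theorem rightHistory_append_inl (hist : List ((X₁ ⊕ X₂) × Y)) (x : X₁) (y : Y) :
    rightHistory (hist ++ [(Sum.inl x, y)]) = rightHistory hist := by
  simp [rightHistory, List.filterMap_cons]

theorem rightHistory_append_inr (hist : List ((X₁ ⊕ X₂) × Y)) (x : X₂) (y : Y) :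
    rightHistory (hist ++ [(Sum.inr x, y)]) = rightHistory hist ++ [(x, y)] := by
  simp [rightHistory]

/-- The learner on a disjoint union that runs `L₁` and `L₂` independently, showing each of them
only the rounds played on its own summand. -/
def sumLearner (L₁ : List (X₁ × Y) → X₁ → Y) (L₂ : List (X₂ × Y) → X₂ → Y)
    (hist : List ((X₁ ⊕ X₂) × Y)) : X₁ ⊕ X₂ → Y :=
  Sum.elim (L₁ (leftHistory hist)) (L₂ (rightHistory hist))

theorem stdMistakes_sumLearner (L₁ : List (X₁ × Y) → X₁ → Y) (L₂ : List (X₂ × Y) → X₂ → Y)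
    (f₁ : X₁ → Y) (f₂ : X₂ → Y) (hist : List ((X₁ ⊕ X₂) × Y)) (xs : List (X₁ ⊕ X₂)) :
    stdMistakes (sumLearner L₁ L₂) (Sum.elim f₁ f₂) hist xs =
      stdMistakes L₁ f₁ (leftHistory hist) (xs.filterMap Sum.getLeft?) +
        stdMistakes L₂ f₂ (rightHistory hist) (xs.filterMap Sum.getRight?) := by
  induction xs generalizing hist with
  | nil => simp [stdMistakes]
  | cons x xs ih =>
    rcases x with x | x
    · rw [stdMistakes, ih, Sum.elim_inl, leftHistory_append_inl, rightHistory_append_inl,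
        ← add_assoc]
      rfl
    · rw [stdMistakes, ih, Sum.elim_inr, leftHistory_append_inr, rightHistory_append_inr,
        add_left_comm]
      rfl

theorem HasMistakeBound.image2_sumElim {F₁ : Set (X₁ → Y)} {F₂ : Set (X₂ → Y)} {M₁ M₂ : ℕ}
    (h₁ : HasMistakeBound F₁ M₁) (h₂ : HasMistakeBound F₂ M₂) :
    HasMistakeBound (Set.image2 Sum.elim F₁ F₂) (M₁ + M₂) := by
  obtain ⟨L₁, hL₁⟩ := h₁
  obtain ⟨L₂, hL₂⟩ := h₂
  refine ⟨sumLearner L₁ L₂, ?_⟩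
  rintro _ ⟨f₁, hf₁, f₂, hf₂, rfl⟩ xs
  rw [stdMistakes_sumLearner]
  exact add_le_add (hL₁ f₁ hf₁ _) (hL₂ f₂ hf₂ _)

end Sum

section Linear

section Semiring

variable {K V W : Type*} [Semiring K] [AddCommMonoid V] [Module K V] [AddCommMonoid W] [Module K W]

variable (K) in
/-- The learner that guesses with some linear map agreeing with the history; its guesses are
arbitrary when the history admits no such map. -/
noncomputable def linearLearner (hist : List (V × W)) : V →ₗ[K] W :=
  Classical.epsilon fun ψ ↦ ∀ p ∈ hist, ψ p.1 = p.2

theorem eqOn_linearLearner_map (φ : V →ₗ[K] W) (seen : List V) :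
    Set.EqOn (linearLearner K (seen.map fun y ↦ (y, φ y))) φ {y | y ∈ seen} := by
  have hspec := Classical.epsilon_spec
    (p := fun ψ : V →ₗ[K] W ↦ ∀ p ∈ seen.map fun y ↦ (y, φ y), ψ p.1 = p.2)
    ⟨φ, by simp⟩
  exact fun y hy ↦ hspec (y, φ y) (List.mem_map_of_mem hy)

theorem notMem_span_of_linearLearner_ne {φ : V →ₗ[K] W} {seen : List V} {x : V}
    (hne : linearLearner K (seen.map fun y ↦ (y, φ y)) x ≠ φ x) :
    x ∉ Submodule.span K {y | y ∈ seen} :=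
  fun hx ↦ hne (LinearMap.eqOn_span (eqOn_linearLearner_map φ seen) hx)

end Semiring

theorem hasMistakeBound_linearMap {K V W : Type*} [DivisionRing K] [AddCommGroup V] [Module K V]
    [FiniteDimensional K V] [AddCommGroup W] [Module K W] :
    HasMistakeBound (Set.range fun φ : V →ₗ[K] W ↦ (φ : V → W)) (Module.finrank K V) := by
  refine ⟨fun hist ↦ linearLearner K hist, ?_⟩
  rintro _ ⟨φ, rfl⟩ xs
  have hmono (seen : List V) (x : V) :
      Submodule.span K {y | y ∈ seen} ≤ Submodule.span K {y | y ∈ seen ++ [x]} :=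
    Submodule.span_mono fun _ hy ↦ List.mem_append_left _ hy
  refine stdMistakes_le_of_progress (fun seen ↦ Module.finrank K (Submodule.span K {y | y ∈ seen}))
    (fun seen x ↦ Submodule.finrank_mono (hmono seen x)) (fun seen x hne ↦ ?_)
    (fun _ ↦ Submodule.finrank_le _) xs
  have hx : x ∈ Submodule.span K {y | y ∈ seen ++ [x]} := Submodule.subset_span (by simp)
  exact Submodule.finrank_lt_finrank_of_lt <|
    SetLike.lt_iff_le_and_exists.2 ⟨hmono seen x, x, hx, notMem_span_of_linearLearner_ne hne⟩

end Linear

section Deviation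

variable {X Y : Type*}

/-- The learner that repeats the recorded value at inputs already seen and follows the reference
function `g` elsewhere. -/
def recallLearner [DecidableEq X] (g : X → Y) (hist : List (X × Y)) (x : X) : Y :=
  (hist.lookup x).getD (g x)

theorem recallLearner_map_of_mem [DecidableEq X] (g f : X → Y) {seen : List X} {x : X}
    (hx : x ∈ seen) :
    recallLearner g (seen.map fun y ↦ (y, f y)) x = f x := by
  rw [recallLearner, List.lookup_graph f hx, Option.getD_some]

theorem recallLearner_map_of_notMem [DecidableEq X] (g f : X → Y) {seen : List X} {x : X}
    (hx : x ∉ seen) :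
    recallLearner g (seen.map fun y ↦ (y, f y)) x = g x := by
  have hnone : (seen.map fun y ↦ (y, f y)).lookup x = none :=
    List.lookup_eq_none_iff.2 <| List.forall_mem_map.2 fun y hy ↦
      bne_iff_ne.2 fun hxy : x = y ↦ hx (hxy ▸ hy)
  rw [recallLearner, hnone, Option.getD_none]

theorem hasMistakeBound_encard_ne_le (g : X → Y) (m : ℕ) :
    HasMistakeBound {f : X → Y | {x | f x ≠ g x}.encard ≤ m} m := by
  classical
  refine ⟨recallLearner g, fun f hf xs ↦ ?_⟩
  let deviations (seen : List X) : Finset X := {x ∈ seen.toFinset | f x ≠ g x}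
  have hmono (seen : List X) (x : X) : deviations seen ⊆ deviations (seen ++ [x]) :=
    Finset.filter_subset_filter _ (by simp)
  refine stdMistakes_le_of_progress (fun seen ↦ (deviations seen).card)
    (fun seen x ↦ Finset.card_le_card (hmono seen x)) (fun seen x hne ↦ ?_) (fun seen ↦ ?_) xs
  · have hunseen : x ∉ seen := fun hx ↦ hne (recallLearner_map_of_mem g f hx)
    have hdev : f x ≠ g x := by
      rw [recallLearner_map_of_notMem g f hunseen] at hne
      exact hne.symm
    exact Finset.card_lt_card <| (Finset.ssubset_iff_of_subset (hmono seen x)).2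
      ⟨x, by simp [deviations, hdev], by simp [deviations, hunseen]⟩
  · have hsub : (deviations seen : Set X) ⊆ {x | f x ≠ g x} := fun x hx ↦
      (Finset.mem_filter.1 hx).2
    have hcard := (Set.encard_le_encard hsub).trans hf
    rwa [Set.encard_coe_eq_coe_finsetCard, Nat.cast_le] at hcard

end Deviation

theorem stmt11_general (K V : Type*) {W ι : Type*} [DivisionRing K] [AddCommGroup V] [Module K V]
    [FiniteDimensional K V] [AddCommGroup W] [Module K W] (g : ι → W) (m : ℕ) :
    HasMistakeBound (Set.image2 Sum.elim (Set.range fun φ : V →ₗ[K] W ↦ (φ : V → W))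
      {h : ι → W | {z | h z ≠ g z}.encard ≤ m}) (Module.finrank K V + m) :=
  hasMistakeBound_linearMap.image2_sumElim (hasMistakeBound_encard_ne_le g m)

theorem combFam_subset_image2_sumElim (𝔽 : Type*) [Field 𝔽] (n : ℕ) :
    CombFam 𝔽 n ⊆ Set.image2 Sum.elim
      (Set.range fun φ : (Fin n → 𝔽) →ₗ[𝔽] 𝔽 ↦ (φ : (Fin n → 𝔽) → 𝔽))
      {h : ℤ → 𝔽 | {z | h z ≠ 0}.encard ≤ n} := by
  rintro _ ⟨α, h, ⟨hfin, hcard⟩, rfl⟩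
  have hencard : {z | h z ≠ 0}.encard ≤ n := by
    rw [← hfin.cast_ncard_eq]
    exact_mod_cast hcard
  exact ⟨_, ⟨dotProductBilin 𝔽 𝔽 α, rfl⟩, h, hencard, rfl⟩

/-- for a finite field 𝔽 (of prime power order k) and n ≥ 2, the
combined family F*_{k,n} has standard optimal mistake bound at most 2n. -/
theorem stmt11 (𝔽 : Type*) [Field 𝔽] [Fintype 𝔽] (n : ℕ) (hn : 2 ≤ n) :
    ∃ L : List ((((Fin n → 𝔽) ⊕ ℤ)) × 𝔽) → ((Fin n → 𝔽) ⊕ ℤ) → 𝔽,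
      ∀ f ∈ CombFam 𝔽 n, ∀ xs : List ((Fin n → 𝔽) ⊕ ℤ),
        stdMistakes L f [] xs ≤ 2 * n := by
  simpa only [Module.finrank_fin_fun, ← two_mul] using!
    (stmt11_general 𝔽 (Fin n → 𝔽) (0 : ℤ → 𝔽) n).mono (combFam_subset_image2_sumElim 𝔽 n)
end
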